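/- Let q = p² (i.e., e = 2) and let f : F_q → F_p belong to the class RF with sign ε satisfying ε η_0(−1) = −1. Then C_f is a linear code of length p², dimension 4 and minimum distance p² − p − 1 which has locality 3, and C_f^⊥ is a linear code of length p², dimension p² − 4 and minimum distance 4 which has locality p² − p − 2. Moreover, C_f^⊥ attains the Singleton-like bound for locally recoverable codes: its minimum distance equals n − k − ⌈k/r⌉ + 2 with n = p², k = p² − 4 and r = p² − p − 2. -/

import Mathlib

open scoped Classical

noncomputable section

/-- The complex primitive `p`-th root of unity `ζ_p = exp(2πi/p)`. -/
def zetapc (p : ℕ) : ℂ := Complex.exp (2 * Real.pi * Complex.I / p)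

/-- `√p* = i^{((p-1)/2)²} √p`, a square root of `p* = (-1)^{(p-1)/2} p`. -/
def sqrtpstar (p : ℕ) : ℂ := Complex.I ^ (((p - 1) / 2) ^ 2) * (Real.sqrt p : ℂ)

/-- The quadratic character of a finite field: `1` on nonzero squares, `-1` on
nonsquares, `0` at `0`. -/
def qchar (F : Type*) [MonoidWithZero F] : F → ℤ :=
  fun y => if y = 0 then 0 else if IsSquare y then 1 else -1

/-- `f : F_q → F_p` belongs to the class `RF` of weakly regular bent functions,
with sign `ε` and dual `fstar`. -/
structure IsRF (p e : ℕ) (Fq : Type*) [Field Fq] [Fintype Fq] [Algebra (ZMod p) Fq]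
    (f : Fq → ZMod p) (ε : ℤ) (fstar : Fq → ZMod p) : Prop where
  sign : ε = 1 ∨ ε = -1
  map_zero : f 0 = 0
  hom : ∃ h : ℕ, Even h ∧ 0 < h ∧ Nat.gcd (h - 1) (p - 1) = 1 ∧
    ∀ a : ZMod p, a ≠ 0 → ∀ x : Fq,
      f (algebraMap (ZMod p) Fq a * x) = a ^ h * f x
  walsh : ∀ β : Fq,
    (∑ x : Fq, zetapc p ^ (f x - Algebra.trace (ZMod p) Fq (β * x)).val)
      = (ε : ℂ) * sqrtpstar p ^ e * zetapc p ^ (fstar β).val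

/-- The code `C_f` attached to `f`. -/
def rfCode (p : ℕ) (Fq : Type*) [Field Fq] [Fintype Fq] [Algebra (ZMod p) Fq]
    (f : Fq → ZMod p) : Set (Fq → ZMod p) :=
  {w | ∃ a c : ZMod p, ∃ b : Fq, ∀ x : Fq,
    w x = a * f x + Algebra.trace (ZMod p) Fq (b * x) + c}

/-- The dual code under the standard inner product. -/
def dualCode {ι F : Type*} [Fintype ι] [CommRing F] (C : Set (ι → F)) : Set (ι → F) :=
  {u | ∀ v ∈ C, ∑ i, u i * v i = 0}

/-- `d` is the minimum distance of the code `C`: the smallest Hamming weight of a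
nonzero codeword. -/
def IsMinDist {ι F : Type*} [Fintype ι] [CommRing F] (C : Set (ι → F)) (d : ℕ) : Prop :=
  (∃ c ∈ C, c ≠ 0 ∧ hammingNorm c = d) ∧ ∀ c ∈ C, c ≠ 0 → d ≤ hammingNorm c

/-- The code `C` has locality `r`: every coordinate `i` can be recovered from some
set `R` of `r` other coordinates. -/
def HasLocality {ι F : Type*} [Fintype ι] (C : Set (ι → F)) (r : ℕ) : Prop :=
  ∀ i : ι, ∃ R : Finset ι, R.card = r ∧ i ∉ R ∧
    ∀ c₁ ∈ C, ∀ c₂ ∈ C, (∀ j ∈ R, c₁ j = c₂ j) → c₁ i = c₂ i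

/-!
For `ε η₀(-1) = -1` and `e = 2` every sum `∑ ζ ^ (f x + φ x)`, `φ` linear, is `-p` times a power of
`ζ`. As `1, ζ, …, ζ ^ (p - 1)` satisfy, up to scaling, only one linear relation over `ℚ`, `f + φ`
takes one value once and every other value `p + 1` times: the graph of `f` is an ovoid of
`PG(3, p)` minus its point at infinity. Planes meet it in at most `p + 1` points, which gives the
weights of the code, and lines in at most two, so any three columns of the generator matrix are
independent. Through each of its points there is a plane holding four of its points; these carry a
dual word of weight four.
-/

open Finset Module

section LinearCodes

variable {ι F : Type*} [Fintype ι] [Field F]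

lemma card_zeros_add_hammingNorm (w : ι → F) :
    #{i | w i = 0} + hammingNorm w = Fintype.card ι := by
  rw [hammingNorm, card_filter_add_card_filter_not, card_univ]

/-- The dual code of a linear code as a linear subspace. -/
def dualSubmodule (C : Submodule F (ι → F)) : Submodule F (ι → F) :=
  C.dualAnnihilator.comap (dotProductEquiv F ι).toLinearMap

lemma coe_dualSubmodule (C : Submodule F (ι → F)) :
    (dualSubmodule C : Set (ι → F)) = dualCode C := by
  ext u
  simp [dualSubmodule, dualCode, Submodule.mem_dualAnnihilator, dotProduct]

lemma finrank_dualSubmodule (C : Submodule F (ι → F)) :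
    finrank F (dualSubmodule C) = Fintype.card ι - finrank F C := by
  have hdual : finrank F (dualSubmodule C) = finrank F C.dualAnnihilator :=
    ((dotProductEquiv F ι).ofSubmodule' C.dualAnnihilator).finrank_eq
  have hsum := Subspace.finrank_add_finrank_dualAnnihilator_eq C
  rw [finrank_fintype_fun_eq_card] at hsum
  omega

lemma le_dualSubmodule_dualSubmodule (C : Submodule F (ι → F)) :
    C ≤ dualSubmodule (dualSubmodule C) := by
  intro w hw
  rw [← SetLike.mem_coe, coe_dualSubmodule, coe_dualSubmodule]
  intro u hu
  simpa only [mul_comm] using hu w hw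

lemma natCard_dualCode [Fintype F] (C : Submodule F (ι → F)) :
    Nat.card (dualCode (C : Set (ι → F))) =
      Fintype.card F ^ (Fintype.card ι - finrank F C) := by
  rw [← coe_dualSubmodule, ← finrank_dualSubmodule, ← Nat.card_eq_fintype_card]
  exact natCard_eq_pow_finrank

lemma hasLocality_of_forall_exists_mem_dualCode {C : Submodule F (ι → F)} {r : ℕ}
    (h : ∀ i, ∃ u ∈ dualCode (C : Set (ι → F)), u i ≠ 0 ∧ hammingNorm u = r + 1) :
    HasLocality (C : Set (ι → F)) r := by
  intro i
  obtain ⟨u, hu, hui, hweight⟩ := h i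
  refine ⟨({j | u j ≠ 0} : Finset ι).erase i, ?_, notMem_erase i _, ?_⟩
  · rw [card_erase_of_mem (by simpa using hui)]
    exact Nat.sub_eq_of_eq_add hweight
  · intro c₁ h₁ c₂ h₂ hagree
    have horth : ∑ j, u j * (c₁ - c₂) j = u i * (c₁ - c₂) i := by
      refine Fintype.sum_eq_single i fun j hj => ?_
      by_cases huj : u j = 0
      · rw [huj, zero_mul]
      · rw [Pi.sub_apply, hagree j (by simp [hj, huj]), sub_self, mul_zero]
    rw [hu _ (C.sub_mem h₁ h₂), eq_comm] at horth
    exact sub_eq_zero.mp ((mul_eq_zero.mp horth).resolve_left hui)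

lemma hasLocality_dualCode {C : Submodule F (ι → F)} {r : ℕ}
    (h : ∀ i, ∃ w ∈ C, w i ≠ 0 ∧ hammingNorm w = r + 1) :
    HasLocality (dualCode (C : Set (ι → F))) r := by
  rw [← coe_dualSubmodule]
  refine hasLocality_of_forall_exists_mem_dualCode fun i => ?_
  obtain ⟨w, hw, hwi⟩ := h i
  refine ⟨w, ?_, hwi⟩
  rw [← coe_dualSubmodule]
  exact le_dualSubmodule_dualSubmodule C hw

lemma add_two_le_hammingNorm_of_mem_dualCode {C : Set (ι → F)} {t : ℕ}
    (ht : t < Fintype.card ι)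
    (hsep : ∀ S : Finset ι, #S = t → ∀ i ∉ S, ∃ w ∈ C, (∀ j ∈ S, w j = 0) ∧ w i ≠ 0)
    {u : ι → F} (hu : u ∈ dualCode C) (hu0 : u ≠ 0) : t + 2 ≤ hammingNorm u := by
  obtain ⟨i, hi⟩ := Function.ne_iff.mp hu0
  by_contra! hlt
  set supp : Finset ι := {j | u j ≠ 0} with hsupp
  have hisupp : i ∈ supp := by simpa [hsupp] using hi
  have hcard : #(supp.erase i) ≤ t := by
    rw [card_erase_of_mem hisupp]
    change #supp < t + 2 at hlt
    omega
  obtain ⟨S, hsub, hSi, hS⟩ := exists_subsuperset_card_eq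
    (erase_subset_erase i (subset_univ supp)) hcard
    (by rw [card_erase_of_mem (mem_univ i), card_univ]; omega)
  have hiS : i ∉ S := fun h => notMem_erase i univ (hSi h)
  obtain ⟨w, hw, hwS, hwi⟩ := hsep S hS i hiS
  have horth : ∑ j, u j * w j = u i * w i := by
    refine Fintype.sum_eq_single i fun j hj => ?_
    by_cases huj : u j = 0
    · rw [huj, zero_mul]
    · rw [hwS j (hsub (by simp [hsupp, hj, huj])), mul_zero]
  rw [hu w hw, eq_comm] at horth
  exact mul_ne_zero hi hwi horth

-- `C` and the words vanishing on `T` span a proper subspace because they meet nontrivially; a word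
-- orthogonal to both lies in the dual code and is supported on `T`.
lemma exists_mem_dualCode_eq_zero_off {C : Submodule F (ι → F)} {T : Finset ι}
    (hT : finrank F C ≤ #T) {w : ι → F} (hw : w ∈ C) (hw0 : w ≠ 0) (hwT : ∀ i ∈ T, w i = 0) :
    ∃ u ∈ dualCode (C : Set (ι → F)), u ≠ 0 ∧ ∀ i ∉ T, u i = 0 := by
  let restrict : (ι → F) →ₗ[F] (T → F) := LinearMap.funLeft F F ((↑) : T → ι)
  let W := LinearMap.ker restrict
  have hfinW : #T + finrank F W = Fintype.card ι := by
    have hsurj := LinearMap.funLeft_surjective_of_injective F F ((↑) : T → ι)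
      Subtype.val_injective
    have h := LinearMap.finrank_range_add_finrank_ker restrict
    rwa [LinearMap.range_eq_top.mpr hsurj, finrank_top, finrank_fintype_fun_eq_card,
      finrank_fintype_fun_eq_card, Fintype.card_coe] at h
  have hinf : 0 < finrank F ↥(C ⊓ W) := by
    rw [Nat.pos_iff_ne_zero, ne_eq, Submodule.finrank_eq_zero]
    refine fun hbot => hw0 ((Submodule.eq_bot_iff _).mp hbot w ⟨hw, ?_⟩)
    exact funext fun i => hwT i i.2
  have hsup : finrank F ↥(C ⊔ W) < Fintype.card ι := by
    have := Submodule.finrank_sup_add_finrank_inf_eq C W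
    omega
  have hdual : dualSubmodule (C ⊔ W) ≠ ⊥ := by
    rw [ne_eq, ← Submodule.finrank_eq_zero, finrank_dualSubmodule]
    omega
  obtain ⟨u, hu, hu0⟩ := Submodule.exists_mem_ne_zero_of_ne_bot hdual
  rw [← SetLike.mem_coe, coe_dualSubmodule] at hu
  refine ⟨u, fun v hv => hu v (Submodule.mem_sup_left hv), hu0, fun i hi => ?_⟩
  have hsingle : Pi.single i 1 ∈ W :=
    funext fun j => Pi.single_eq_of_ne (fun h : (j : ι) = i => hi (h ▸ j.2)) 1
  simpa [Pi.single_apply] using hu _ (Submodule.mem_sup_right hsingle)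

end LinearCodes

lemma sum_card_fiber {X Y : Type*} [Fintype X] [Fintype Y] [DecidableEq Y] (g : X → Y) :
    ∑ y, #{x | g x = y} = Fintype.card X := by
  rw [← card_univ, card_eq_sum_card_fiberwise fun x _ => mem_univ (g x)]

section LinearForms

variable {K V : Type*} [Field K] [AddCommGroup V] [Module K V]

lemma exists_dual_apply_eq {v : V} (hv : v ≠ 0) (t : K) : ∃ φ : Dual K V, φ v = t := by
  obtain ⟨φ, hφ⟩ := Projective.exists_dual_eq_one K hv
  exact ⟨t • φ, by simp [hφ]⟩

lemma exists_dual_ne_zero_apply_eq_zero (hV : 1 < finrank K V) (v : V) :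
    ∃ ψ : Dual K V, ψ ≠ 0 ∧ ψ v = 0 := by
  have hlt : K ∙ v < ⊤ := by
    rw [lt_top_iff_ne_top]
    intro htop
    have hle := finrank_span_le_card (R := K) ({v} : Set V)
    rw [htop, finrank_top, Set.toFinset_singleton, card_singleton] at hle
    omega
  obtain ⟨ψ, hψ, hmap⟩ := Submodule.exists_dual_map_eq_bot_of_lt_top hlt inferInstance
  refine ⟨ψ, hψ, ?_⟩
  rw [← Submodule.mem_bot K, ← hmap]
  exact Submodule.mem_map_of_mem (Submodule.mem_span_singleton_self v)

lemma card_mul_card_fiber_dual [Fintype K] [Fintype V] {ψ : Dual K V} (hψ : ψ ≠ 0) (t : K) :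
    Fintype.card K * #{x | ψ x = t} = Fintype.card V := by
  have hfiber (s : K) : #{x | ψ x = s} = #{x | ψ x = t} :=
    AddMonoidHom.card_fiber_eq_of_mem_range ψ (LinearMap.surjective hψ s)
      (LinearMap.surjective hψ t)
  rw [← sum_card_fiber ψ]
  simp only [hfiber, sum_const, card_univ, smul_eq_mul]

end LinearForms

section OvoidalFunctions

variable {K V : Type*} [Field K] [AddCommGroup V] [Module K V] {f : V → K}

/-- The evaluation on the graph of `f` of the affine function with coefficients `(a, φ, c)`. -/
def graphEval (f : V → K) : K × Dual K V × K →ₗ[K] V → K where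
  toFun v x := v.1 * f x + v.2.1 x + v.2.2
  map_add' v w := by
    ext x
    simp only [Prod.fst_add, Prod.snd_add, LinearMap.add_apply, Pi.add_apply]
    ring
  map_smul' k v := by
    ext x
    simp only [Prod.smul_fst, Prod.smul_snd, LinearMap.smul_apply, smul_eq_mul, RingHom.id_apply,
      Pi.smul_apply]
    ring

/-- The code of the affine functions of three-space restricted to the graph of `f`. -/
def graphCode (f : V → K) : Submodule K (V → K) := LinearMap.range (graphEval f)

lemma graphEval_mem (v : K × Dual K V × K) : graphEval f v ∈ graphCode f :=
  LinearMap.mem_range_self _ v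

lemma graphEval_one_eq_zero_iff {φ : Dual K V} {t : K} {x : V} :
    graphEval f (1, φ, -t) x = 0 ↔ f x + φ x = t := by
  simp [graphEval, ← sub_eq_add_neg, sub_eq_zero]

lemma graphEval_zero_eq_zero_iff {ψ : Dual K V} {d : K} {x : V} :
    graphEval f (0, ψ, -d) x = 0 ↔ ψ x = d := by
  simp [graphEval, ← sub_eq_add_neg, sub_eq_zero]

variable [Fintype K] [Fintype V]

local notation "q" => Fintype.card K

lemma sum_card_zeros_pencil {X : Type*} [Fintype X] (g l : X → K) :
    ∑ k : K, #{x | g x + k * l x = 0} = #{x | l x ≠ 0} + q * #{x | g x = 0 ∧ l x = 0} := by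
  have hpoint (x : X) : #{k | g x + k * l x = 0} =
      (if l x ≠ 0 then 1 else 0) + q * if g x = 0 ∧ l x = 0 then 1 else 0 := by
    by_cases hl : l x = 0
    · by_cases hg : g x = 0 <;> simp [hl, hg]
    · have hroot (k : K) : g x + k * l x = 0 ↔ k = -g x / l x := by
        rw [eq_div_iff hl, add_comm, add_eq_zero_iff_eq_neg]
      have hcard : #{k | g x + k * l x = 0} = 1 :=
        card_eq_one.mpr ⟨-g x / l x, by ext k; simp [hroot]⟩
      simp [hl, hcard]
  calc ∑ k : K, #{x | g x + k * l x = 0}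
      = ∑ x, #{k | g x + k * l x = 0} := by
        simp only [card_filter]
        exact sum_comm
    _ = _ := by simp only [hpoint, sum_add_distrib, ← mul_sum, ← card_filter]

/-- A function whose graph, completed by the point at infinity of the vertical lines, is an ovoid
of `PG(3, q)`: in each family of parallel non-vertical planes, one plane is tangent to the graph
and all the others meet it in `q + 1` points. -/
def IsOvoidal (f : V → K) : Prop :=
  ∀ φ : Dual K V, ∃ s : K, ∀ t : K, #{x | f x + φ x = t} = if t = s then 1 else q + 1

namespace IsOvoidal

lemma card_eq (hf : IsOvoidal f) : Fintype.card V = q ^ 2 := by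
  obtain ⟨s, hs⟩ := hf 0
  have hfiber (t : K) : #{x | f x + (0 : Dual K V) x = t} + (if t = s then q else 0) = q + 1 := by
    rw [hs]
    split_ifs <;> omega
  have hsum := sum_congr rfl fun t (_ : t ∈ univ) => hfiber t
  rw [sum_add_distrib, sum_card_fiber fun x => f x + (0 : Dual K V) x, sum_ite_eq'] at hsum
  simp only [mem_univ, if_true, card_univ, sum_const, smul_eq_mul] at hsum
  linarith

lemma finrank_eq_two (hf : IsOvoidal f) : finrank K V = 2 :=
  Nat.pow_right_injective Fintype.one_lt_card (card_eq_pow_finrank.symm.trans hf.card_eq)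

lemma card_fiber_le (hf : IsOvoidal f) (φ : Dual K V) (t : K) :
    #{x | f x + φ x = t} ≤ q + 1 := by
  obtain ⟨s, hs⟩ := hf φ
  rw [hs]
  split_ifs <;> omega

lemma card_fiber_dual (hf : IsOvoidal f) {ψ : Dual K V} (hψ : ψ ≠ 0) (t : K) :
    #{x | ψ x = t} = q := by
  have h := card_mul_card_fiber_dual hψ t
  rw [hf.card_eq, sq] at h
  exact Nat.eq_of_mul_eq_mul_left Fintype.card_pos h

lemma card_zeros_graphEval_le (hf : IsOvoidal f) {v : K × Dual K V × K} (hv : v ≠ 0) :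
    #{x | graphEval f v x = 0} ≤ q + 1 := by
  obtain ⟨a, φ, c⟩ := v
  by_cases ha : a = 0
  · subst ha
    by_cases hφ : φ = 0
    · have hc : c ≠ 0 := by
        rintro rfl
        exact hv (by rw [hφ]; rfl)
      simp [graphEval, hφ, hc]
    · obtain ⟨d, rfl⟩ : ∃ d, c = -d := ⟨-c, (neg_neg c).symm⟩
      simp only [graphEval_zero_eq_zero_iff, hf.card_fiber_dual hφ]
      omega
  · have hnormal (x : V) :
        graphEval f (a, φ, c) x = 0 ↔ f x + (a⁻¹ • φ) x = -(a⁻¹ * c) := by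
      have hscale : graphEval f (a, φ, c) = a • graphEval f (1, a⁻¹ • φ, -(-(a⁻¹ * c))) := by
        rw [← map_smul]
        simp [ha]
      rw [hscale, Pi.smul_apply, smul_eq_mul, mul_eq_zero, graphEval_one_eq_zero_iff]
      exact or_iff_right ha
    simp only [hnormal]
    exact hf.card_fiber_le _ _

lemma le_hammingNorm_graphEval (hf : IsOvoidal f) {v : K × Dual K V × K} (hv : v ≠ 0) :
    q ^ 2 - q - 1 ≤ hammingNorm (graphEval f v) := by
  have hzeros := hf.card_zeros_graphEval_le hv
  have hadd := card_zeros_add_hammingNorm (graphEval f v)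
  rw [hf.card_eq] at hadd
  omega

-- A non-vertical line lies in `q` non-vertical planes, each holding at most `q + 1` points of the
-- graph, and in one vertical plane, holding `q` of them.
lemma card_line_le_two (hf : IsOvoidal f) (φ : Dual K V) (t : K) {ψ : Dual K V} (hψ : ψ ≠ 0)
    (d : K) : #{x | f x + φ x = t ∧ ψ x = d} ≤ 2 := by
  have hplane (k : K) : #{x | f x + φ x - t + k * (ψ x - d) = 0} ≤ q + 1 := by
    have hiff (x : V) :
        f x + φ x - t + k * (ψ x - d) = 0 ↔ f x + (φ + k • ψ) x = t + k * d := by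
      rw [← sub_eq_zero (b := t + k * d), LinearMap.add_apply, LinearMap.smul_apply, smul_eq_mul]
      ring_nf
    simp only [hiff]
    exact hf.card_fiber_le _ _
  have hvertical : q + #{x | ψ x - d ≠ 0} = q ^ 2 := by
    rw [← hf.card_eq, ← hf.card_fiber_dual hψ d, ← card_univ (α := V)]
    simp only [sub_ne_zero]
    exact card_filter_add_card_filter_not _
  have hcount := sum_card_zeros_pencil (fun x => f x + φ x - t) (fun x => ψ x - d)
  have hle : ∑ k : K, #{x | f x + φ x - t + k * (ψ x - d) = 0} ≤ q * (q + 1) :=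
    (sum_le_card_nsmul _ _ _ fun k _ => hplane k).trans_eq (by simp)
  simp only [sub_eq_zero (b := t), sub_eq_zero (b := d)] at hcount
  have hq : 0 < q := Fintype.card_pos
  nlinarith

lemma exists_graphCode_separating (hf : IsOvoidal f) {S : Finset V} (hS : #S = 2) {z : V}
    (hz : z ∉ S) : ∃ w ∈ graphCode f, (∀ x ∈ S, w x = 0) ∧ w z ≠ 0 := by
  obtain ⟨x, y, hxy, rfl⟩ := card_eq_two.mp hS
  obtain ⟨φ, hφ⟩ := exists_dual_apply_eq (K := K) (sub_ne_zero.mpr hxy) (f y - f x)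
  obtain ⟨ψ, hψ0, hψ⟩ := exists_dual_ne_zero_apply_eq_zero (K := K)
    (by rw [hf.finrank_eq_two]; exact one_lt_two) (x - y)
  have hfy : f y + φ y = f x + φ x := by
    rw [map_sub] at hφ
    linear_combination -hφ
  have hψy : ψ y = ψ x := by
    rw [map_sub] at hψ
    linear_combination -hψ
  by_cases hfz : f z + φ z = f x + φ x
  · by_cases hψz : ψ z = ψ x
    · have hsub : insert z {x, y} ⊆
          ({u | f u + φ u = f x + φ x ∧ ψ u = ψ x} : Finset V) := by
        simp [insert_subset_iff, hfy, hψy, hfz, hψz]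
      have hthree := card_le_card hsub
      rw [card_insert_of_notMem hz, hS] at hthree
      have := hf.card_line_le_two φ (f x + φ x) hψ0 (ψ x)
      omega
    · refine ⟨graphEval f (0, ψ, -ψ x), graphEval_mem _, ?_, ?_⟩
      · simp [graphEval_zero_eq_zero_iff, hψy]
      · rwa [ne_eq, graphEval_zero_eq_zero_iff]
  · refine ⟨graphEval f (1, φ, -(f x + φ x)), graphEval_mem _, ?_, ?_⟩
    · simp only [graphEval_one_eq_zero_iff, mem_insert, mem_singleton, forall_eq_or_imp, forall_eq,
        hfy, and_self]
    · rwa [ne_eq, graphEval_one_eq_zero_iff]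

lemma four_le_hammingNorm_of_mem_dualCode (hf : IsOvoidal f) {u : V → K}
    (hu : u ∈ dualCode (graphCode f : Set (V → K))) (hu0 : u ≠ 0) : 4 ≤ hammingNorm u := by
  have hcard : 2 < Fintype.card V := by
    have : 1 < q := Fintype.one_lt_card
    rw [hf.card_eq]
    nlinarith
  exact add_two_le_hammingNorm_of_mem_dualCode hcard
    (fun _ hS _ hz => hf.exists_graphCode_separating hS hz) hu hu0

lemma graphEval_injective (hq : 2 < q) (hf : IsOvoidal f) :
    Function.Injective (graphEval f) := by
  rw [← LinearMap.ker_eq_bot, LinearMap.ker_eq_bot']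
  intro v hv
  by_contra hv0
  have hnorm := hf.le_hammingNorm_graphEval hv0
  rw [hv, hammingNorm_zero] at hnorm
  have : q + 2 ≤ q ^ 2 := by nlinarith
  omega

lemma finrank_graphCode (hq : 2 < q) (hf : IsOvoidal f) : finrank K (graphCode f) = 4 := by
  rw [graphCode, LinearMap.finrank_range_of_inj (hf.graphEval_injective hq), finrank_prod,
    finrank_prod, Subspace.dual_finrank_eq, hf.finrank_eq_two, finrank_self]

lemma natCard_graphCode (hq : 2 < q) (hf : IsOvoidal f) :
    Nat.card (graphCode f : Set (V → K)) = q ^ 4 := by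
  rw [← hf.finrank_graphCode hq, ← Nat.card_eq_fintype_card]
  exact natCard_eq_pow_finrank

lemma exists_mem_graphCode_hammingNorm_eq (hq : 2 < q) (hf : IsOvoidal f) (x : V) :
    ∃ w ∈ graphCode f, w x ≠ 0 ∧ hammingNorm w = q ^ 2 - q - 1 := by
  obtain ⟨s, hs⟩ := hf 0
  obtain ⟨t, ht⟩ : ∃ t, t ∉ ({s, f x} : Finset K) := by
    refine (exists_mem_notMem_of_card_lt_card (t := univ) ?_).imp fun _ => And.right
    exact card_le_two.trans_lt (by rwa [card_univ])
  simp only [mem_insert, mem_singleton, not_or] at ht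
  refine ⟨graphEval f (1, 0, -t), graphEval_mem _, ?_, ?_⟩
  · rw [ne_eq, graphEval_one_eq_zero_iff]
    simpa using Ne.symm ht.2
  · have hadd := card_zeros_add_hammingNorm (graphEval f (1, 0, -t))
    simp only [graphEval_one_eq_zero_iff] at hadd
    rw [hs, if_neg ht.1, hf.card_eq] at hadd
    omega

lemma exists_card_fiber_eq_add_one (hf : IsOvoidal f) (x : V) :
    ∃ φ : Dual K V, #{y | f y + φ y = f x + φ x} = q + 1 := by
  have : Nontrivial V := nontrivial_of_finrank_pos (R := K) (by rw [hf.finrank_eq_two]; omega)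
  obtain ⟨y, hyx⟩ := exists_ne x
  obtain ⟨φ, hφ⟩ := exists_dual_apply_eq (K := K) (sub_ne_zero.mpr hyx) (f x - f y)
  have hfy : f y + φ y = f x + φ x := by
    rw [map_sub] at hφ
    linear_combination hφ
  obtain ⟨s, hs⟩ := hf φ
  refine ⟨φ, (hs _).trans (if_neg fun htangent => ?_)⟩
  have hcard := hs (f x + φ x)
  rw [if_pos htangent] at hcard
  exact hyx (card_le_one.mp hcard.le y (by simp [hfy]) x (by simp))

lemma exists_mem_dualCode_hammingNorm_eq_four (hq : 2 < q) (hf : IsOvoidal f) (x : V) :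
    ∃ u ∈ dualCode (graphCode f : Set (V → K)), u x ≠ 0 ∧ hammingNorm u = 4 := by
  obtain ⟨φ, hφ⟩ := hf.exists_card_fiber_eq_add_one x
  obtain ⟨T, hxT, hTplane, hT⟩ := exists_subsuperset_card_eq (n := 4)
    (singleton_subset_iff.mpr (show x ∈ ({y | f y + φ y = f x + φ x} : Finset V) by simp))
    (by simp) (by omega)
  have hw0 : graphEval f (1, φ, -(f x + φ x)) ≠ 0 :=
    (map_ne_zero_iff _ (hf.graphEval_injective hq)).mpr fun h => one_ne_zero (congrArg Prod.fst h)
  obtain ⟨u, hu, hu0, huT⟩ := exists_mem_dualCode_eq_zero_off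
    (by rw [hf.finrank_graphCode hq, hT]) (graphEval_mem _) hw0
    fun y hy => graphEval_one_eq_zero_iff.mpr (by simpa using hTplane hy)
  have hsub : ({y | u y ≠ 0} : Finset V) ⊆ T := fun y hy => by
    by_contra hyT
    exact (mem_filter.mp hy).2 (huT y hyT)
  have hsupp : ({y | u y ≠ 0} : Finset V) = T :=
    eq_of_subset_of_card_le hsub (hT.trans_le (hf.four_le_hammingNorm_of_mem_dualCode hu hu0))
  refine ⟨u, hu, ?_, by rw [hammingNorm, hsupp, hT]⟩
  rw [singleton_subset_iff, ← hsupp] at hxT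
  exact (mem_filter.mp hxT).2

lemma isMinDist_graphCode (hq : 2 < q) (hf : IsOvoidal f) :
    IsMinDist (graphCode f : Set (V → K)) (q ^ 2 - q - 1) := by
  refine ⟨?_, ?_⟩
  · obtain ⟨w, hw, hw0, hweight⟩ := hf.exists_mem_graphCode_hammingNorm_eq hq 0
    exact ⟨w, hw, Function.ne_iff.mpr ⟨0, hw0⟩, hweight⟩
  · rintro _ ⟨v, rfl⟩ hv
    exact hf.le_hammingNorm_graphEval (ne_of_apply_ne (graphEval f) (by rwa [map_zero]))

lemma isMinDist_dualCode_graphCode (hq : 2 < q) (hf : IsOvoidal f) :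
    IsMinDist (dualCode (graphCode f : Set (V → K))) 4 := by
  refine ⟨?_, fun u => hf.four_le_hammingNorm_of_mem_dualCode⟩
  obtain ⟨u, hu, hu0, hweight⟩ := hf.exists_mem_dualCode_hammingNorm_eq_four hq 0
  exact ⟨u, hu, Function.ne_iff.mpr ⟨0, hu0⟩, hweight⟩

lemma hasLocality_dualCode_graphCode (hq : 2 < q) (hf : IsOvoidal f) :
    HasLocality (dualCode (graphCode f : Set (V → K))) (q ^ 2 - q - 2) := by
  refine hasLocality_dualCode fun x => ?_
  obtain ⟨w, hw, hwx, hweight⟩ := hf.exists_mem_graphCode_hammingNorm_eq hq x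
  have : q + 2 < q ^ 2 := by nlinarith
  exact ⟨w, hw, hwx, by omega⟩

end IsOvoidal

lemma sq_sub_four_ceilDiv {n : ℕ} (hn : 2 < n) : (n ^ 2 - 4) ⌈/⌉ (n ^ 2 - n - 2) = 2 := by
  have hsq : 3 * n ≤ n ^ 2 := by nlinarith
  refine le_antisymm ?_ (not_lt.mp fun hlt => ?_)
  · rw [ceilDiv_le_iff_le_mul (by omega)]
    omega
  · have hle := (ceilDiv_le_iff_le_mul (by omega)).mp (Nat.le_of_lt_succ hlt)
    omega

theorem stmt19_general (hq : 2 < q) (hf : IsOvoidal f) :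
    Fintype.card V = q ^ 2 ∧
    Nat.card (graphCode f : Set (V → K)) = q ^ 4 ∧
    IsMinDist (graphCode f : Set (V → K)) (q ^ 2 - q - 1) ∧
    HasLocality (graphCode f : Set (V → K)) 3 ∧
    Nat.card (dualCode (graphCode f : Set (V → K))) = q ^ (q ^ 2 - 4) ∧
    IsMinDist (dualCode (graphCode f : Set (V → K))) 4 ∧
    HasLocality (dualCode (graphCode f : Set (V → K))) (q ^ 2 - q - 2) ∧
    4 = q ^ 2 - (q ^ 2 - 4) - (q ^ 2 - 4) ⌈/⌉ (q ^ 2 - q - 2) + 2 := by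
  refine ⟨hf.card_eq, hf.natCard_graphCode hq, hf.isMinDist_graphCode hq,
    hasLocality_of_forall_exists_mem_dualCode (hf.exists_mem_dualCode_hammingNorm_eq_four hq), ?_,
    hf.isMinDist_dualCode_graphCode hq, hf.hasLocality_dualCode_graphCode hq, ?_⟩
  · rw [natCard_dualCode, hf.finrank_graphCode hq, hf.card_eq]
  · rw [sq_sub_four_ceilDiv hq]
    have : 4 ≤ q ^ 2 := by nlinarith
    omega

end OvoidalFunctions

section ExponentialSums

variable {p : ℕ} [Fact p.Prime] {F : Type*} [Field F] [CharZero F] {ζ : F}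

open Polynomial in
-- The polynomial with coefficients `a` is a multiple of the cyclotomic polynomial
-- `1 + X + ⋯ + X ^ (p - 1)` of degree at most `p - 1`, hence a constant multiple of it.
lemma eq_of_sum_mul_pow_val_eq_zero (hζ : IsPrimitiveRoot ζ p) {a : ZMod p → ℤ}
    (ha : ∑ t, (a t : F) * ζ ^ t.val = 0) (s t : ZMod p) : a s = a t := by
  have hp : p.Prime := Fact.out
  let Q : ℤ[X] := ∑ t, C (a t) * X ^ t.val
  have hroot : aeval ζ Q = 0 := by simpa [Q] using ha
  have hdvd : cyclotomic p ℤ ∣ Q := by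
    rw [cyclotomic_eq_minpoly hζ hp.pos]
    exact minpoly.isIntegrallyClosed_dvd (hζ.isIntegral hp.pos) hroot
  have hdeg : Q.natDegree ≤ (cyclotomic p ℤ).natDegree := by
    rw [natDegree_cyclotomic, Nat.totient_prime hp]
    refine natDegree_sum_le_of_forall_le _ _ fun t _ => (natDegree_C_mul_X_pow_le _ _).trans ?_
    exact Nat.le_sub_one_of_lt t.val_lt
  have hQ := eq_leadingCoeff_mul_of_monic_of_dvd_of_natDegree_le (cyclotomic.monic p ℤ) hdvd hdeg
  have hcoeff (t : ZMod p) : a t = Q.leadingCoeff := by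
    have h := congrArg (coeff · t.val) hQ
    simpa [Q, cyclotomic_prime, coeff_X_pow, (ZMod.val_injective p).eq_iff, t.val_lt] using h
  rw [hcoeff s, hcoeff t]

lemma mul_card_fiber_sub_of_sum_pow_val_eq (hζ : IsPrimitiveRoot ζ p) {X : Type*} [Fintype X]
    {g : X → ZMod p} {m : ℤ} {s : ZMod p} (h : ∑ x, ζ ^ (g x).val = m * ζ ^ s.val)
    (t : ZMod p) :
    (p : ℤ) * (#{x | g x = t} - if t = s then m else 0) = Fintype.card X - m := by
  let a (t : ZMod p) : ℤ := #{x | g x = t} - if t = s then m else 0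
  have hsum : ∑ x, ζ ^ (g x).val = ∑ t, (#{x | g x = t} : F) * ζ ^ t.val := by
    rw [← sum_fiberwise univ g]
    refine sum_congr rfl fun t _ => ?_
    rw [sum_congr rfl fun x hx => by rw [(mem_filter.mp hx).2], sum_const, nsmul_eq_mul]
  have hrel : ∑ t, (a t : F) * ζ ^ t.val = 0 := by
    simp [a, sub_mul, ← hsum, h, ite_mul]
  calc (p : ℤ) * a t = ∑ _u : ZMod p, a t := by simp
    _ = ∑ u, a u := sum_congr rfl fun u _ => eq_of_sum_mul_pow_val_eq_zero hζ hrel t u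
    _ = Fintype.card X - m := by
      rw [← sum_card_fiber g]
      simp [a]

lemma isOvoidal_of_sum_pow_val_eq (hζ : IsPrimitiveRoot ζ p) {V : Type*} [AddCommGroup V]
    [Module (ZMod p) V] [Fintype V] (hV : Fintype.card V = p ^ 2) {f : V → ZMod p}
    (h : ∀ φ : Dual (ZMod p) V, ∃ s : ZMod p,
      ∑ x, ζ ^ (f x + φ x).val = -p * ζ ^ s.val) : IsOvoidal f := by
  intro φ
  obtain ⟨s, hs⟩ := h φ
  refine ⟨s, fun t => ?_⟩
  have hfiber := mul_card_fiber_sub_of_sum_pow_val_eq hζ (m := -p) (by simpa using hs) t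
  have hp : (p : ℤ) ≠ 0 := mod_cast (Fact.out : p.Prime).ne_zero
  have hval : (#{x | f x + φ x = t} : ℤ) - (if t = s then -(p : ℤ) else 0) = p + 1 := by
    apply mul_left_cancel₀ hp
    rw [hfiber, hV]
    push_cast
    ring
  have hnat : #{x | f x + φ x = t} = if t = s then 1 else p + 1 := by
    split_ifs at hval ⊢ <;> omega
  convert hnat
  exact ZMod.card p

end ExponentialSums

section WeaklyRegularBentFunctions

lemma exists_trace_mul_eq_dual {K L : Type*} [Field K] [Field L] [Algebra K L]
    [FiniteDimensional K L] [Algebra.IsSeparable K L] (φ : Dual K L) :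
    ∃ b : L, ∀ x, Algebra.trace K L (b * x) = φ x := by
  obtain ⟨b, rfl⟩ := ((Algebra.traceForm K L).toDual (traceForm_nondegenerate K L)).surjective φ
  exact ⟨b, fun _ => rfl⟩

variable {p : ℕ} [Fact p.Prime]

lemma qchar_neg_one (hodd : Odd p) : qchar (ZMod p) (-1) = (-1) ^ (p / 2) := by
  have hchar : ringChar (ZMod p) ≠ 2 := by
    rw [ZMod.ringChar_zmod_n]
    rintro rfl
    exact absurd hodd (by decide)
  have h := quadraticChar_neg_one hchar
  rw [ZMod.card, ZMod.χ₄_eq_neg_one_pow (Nat.odd_iff.mp hodd)] at h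
  rw [← h, quadraticChar_apply, qchar, quadraticCharFun]
  congr

lemma sqrtpstar_sq (hodd : Odd p) : sqrtpstar p ^ 2 = (qchar (ZMod p) (-1) : ℂ) * p := by
  have hsqrt : ((Real.sqrt p : ℝ) : ℂ) ^ 2 = p := by
    rw [← Complex.ofReal_pow, Real.sq_sqrt p.cast_nonneg, Complex.ofReal_natCast]
  have hhalf : (p - 1) / 2 = p / 2 := by
    obtain ⟨k, rfl⟩ := hodd
    omega
  rw [sqrtpstar, mul_pow, hsqrt, pow_right_comm, Complex.I_sq, hhalf, qchar_neg_one hodd, sq,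
    pow_mul, Int.cast_pow, Int.cast_neg, Int.cast_one]
  rcases Nat.even_or_odd (p / 2) with heven | hodd'
  · simp [heven.neg_one_pow]
  · simp [hodd'.neg_one_pow]

variable {Fq : Type*} [Field Fq] [Fintype Fq] [Algebra (ZMod p) Fq] {f : Fq → ZMod p}

lemma rfCode_eq_graphCode : rfCode p Fq f = graphCode f := by
  ext w
  constructor
  · rintro ⟨a, c, b, hw⟩
    exact ⟨(a, Algebra.trace (ZMod p) Fq ∘ₗ LinearMap.mulLeft (ZMod p) b, c),
      funext fun x => (hw x).symm⟩
  · rintro ⟨⟨a, φ, c⟩, rfl⟩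
    obtain ⟨b, hb⟩ := exists_trace_mul_eq_dual φ
    exact ⟨a, c, b, fun x => by rw [hb]; rfl⟩

lemma IsRF.isOvoidal (hodd : Odd p) (hcq : Fintype.card Fq = p ^ 2) {ε : ℤ}
    {fstar : Fq → ZMod p} (hRF : IsRF p 2 Fq f ε fstar)
    (hsign : ε * qchar (ZMod p) (-1) = -1) : IsOvoidal f := by
  have hζ : IsPrimitiveRoot (zetapc p) p :=
    Complex.isPrimitiveRoot_exp p (Fact.out : p.Prime).ne_zero
  refine isOvoidal_of_sum_pow_val_eq hζ hcq fun φ => ?_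
  obtain ⟨b, hb⟩ := exists_trace_mul_eq_dual φ
  refine ⟨fstar (-b), ?_⟩
  have hcoeff : (ε : ℂ) * sqrtpstar p ^ 2 = -p := by
    rw [sqrtpstar_sq hodd, ← mul_assoc, ← Int.cast_mul, hsign, Int.cast_neg, Int.cast_one,
      neg_one_mul]
  simpa only [neg_mul, map_neg, sub_neg_eq_add, hb, hcoeff] using hRF.walsh (-b)

end WeaklyRegularBentFunctions

theorem stmt19 (p : ℕ) [Fact p.Prime] (hodd : Odd p)
    (Fq : Type) [Field Fq] [Fintype Fq] [Algebra (ZMod p) Fq]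
    (hcq : Fintype.card Fq = p ^ 2)
    (f : Fq → ZMod p) (ε : ℤ) (fstar : Fq → ZMod p) (hRF : IsRF p 2 Fq f ε fstar)
    (hsign : ε * qchar (ZMod p) (-1) = -1)
    (C : Set (Fq → ZMod p)) (hC : C = rfCode p Fq f) :
    -- `C` is a `[p², 4, p² - p - 1]` code with locality `3`
    Fintype.card Fq = p ^ 2 ∧
    Nat.card C = p ^ 4 ∧
    IsMinDist C (p ^ 2 - p - 1) ∧
    HasLocality C 3 ∧
    -- the dual is a `[p², p² - 4, 4]` code with locality `p² - p - 2`
    Nat.card (dualCode C) = p ^ (p ^ 2 - 4) ∧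
    IsMinDist (dualCode C) 4 ∧
    HasLocality (dualCode C) (p ^ 2 - p - 2) ∧
    -- the dual attains the Singleton-like bound for LRCs:
    -- `d = n - k - ⌈k/r⌉ + 2` with `n = p²`, `k = p² - 4`, `r = p² - p - 2`
    4 = p ^ 2 - (p ^ 2 - 4) - (p ^ 2 - 4) ⌈/⌉ (p ^ 2 - p - 2) + 2 := by
  have hp : 2 < Fintype.card (ZMod p) := by
    rw [ZMod.card]
    exact (Fact.out : p.Prime).two_le.lt_of_ne' (hodd.ne_two_of_dvd_nat dvd_rfl)
  simpa only [hC, rfCode_eq_graphCode, ZMod.card] using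
    stmt19_general hp (hRF.isOvoidal hodd hcq hsign)
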